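/- arXiv:1610.08885 — 2 statements merged into one kernel-verified Lean document; each statement's English description precedes it below -/
import Mathlib

section
/- Let b* be a unit vector in ℝ^n maximizing the smallest eigenvalue of W(b) over all unit vectors b, and let x* be a unit eigenvector of W(b*) corresponding to the smallest eigenvalue of W(b*). Then all entries of x* and of b* are nonzero, and the signs interlace: either sgn(x*_i) = (−1)^i sgn(b*_i) for all i, or sgn(x*_i) = −(−1)^i sgn(b*_i) for all i; equivalently sgn(x*) = ±σ* sgn(b*). -/
/-!
Let `Λ = diag(λ)`. The identity `ΛΨ + ΨΛ = 1 1ᵀ` does two things. Scaled by `b`, it forces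
`W(b)` to be positive semidefinite, since its right-hand side `b bᵀ` is. Moreover, if `Ψ u = 1`,
it makes `Ψ diag(u) Ψ` commute with `Λ`; that matrix is therefore diagonal, so that
`Ψ⁻¹ = diag(u) Ψ diag(u)` and, when no `bᵢ` vanishes, `W(b)⁻¹ = W(u / b)`.

A maximizer `b*` has positive smallest eigenvalue, because a constant unit vector does, and so has
no zero entry. By Lagrange interpolation `u` alternates in sign, hence conjugating `W(u / b*)` by
the signature `σ* sgn(b*)` gives an entrywise positive matrix. As `x*` is an eigenvector of
`W(b*)⁻¹` for its largest eigenvalue, Perron–Frobenius applies to `σ* sgn(b*) x*`.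
-/

open Matrix BigOperators

/-- The Cauchy matrix with entries `1/(λᵢ + λⱼ)`. -/
noncomputable def cauchyPsi (n : ℕ) (lam : Fin n → ℝ) : Matrix (Fin n) (Fin n) ℝ :=
  Matrix.of fun i j => 1 / (lam i + lam j)

/-- `W(b) = diag(b) Ψ diag(b)`. -/
noncomputable def cauchyW (n : ℕ) (lam : Fin n → ℝ) (b : Fin n → ℝ) :
    Matrix (Fin n) (Fin n) ℝ :=
  Matrix.diagonal b * cauchyPsi n lam * Matrix.diagonal b

section Spectrum

variable {𝕜 ι : Type*} [RCLike 𝕜] [Fintype ι] {A P : Matrix ι ι 𝕜}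

open scoped ComplexOrder MatrixOrder

theorem posSemidef_of_posSemidef_lyapunov (hA : A.IsHermitian) (hP : P.PosDef)
    (h : (P * A + A * P).PosSemidef) : A.PosSemidef := by
  classical
  rw [hA.posSemidef_iff_eigenvalues_nonneg]
  intro i
  set a : ℝ := hA.eigenvalues i
  set v : ι → 𝕜 := (hA.eigenvectorBasis i).ofLp
  have hv : v ≠ 0 := by
    simpa [v] using hA.eigenvectorBasis.orthonormal.ne_zero i
  have hAv : A *ᵥ v = a • v := hA.mulVec_eigenvectorBasis i
  have hvA : star v ᵥ* A = a • star v := by rw [← hA.eq, ← star_mulVec, hAv]; simp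
  have hvPA : star v ⬝ᵥ (P * A + A * P) *ᵥ v = (2 * a) • (star v ⬝ᵥ P *ᵥ v) := by
    rw [add_mulVec, dotProduct_add, ← mulVec_mulVec, ← mulVec_mulVec, hAv, mulVec_smul,
      dotProduct_smul, dotProduct_mulVec _ A, hvA, smul_dotProduct, two_mul, add_smul]
  have hform : 0 ≤ 2 * a * RCLike.re (star v ⬝ᵥ P *ᵥ v) := by
    simpa [hvPA, RCLike.smul_re] using h.re_dotProduct_nonneg v
  simpa using nonneg_of_mul_nonneg_left hform (hP.re_dotProduct_pos hv)

variable [DecidableEq ι]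

theorem sInf_spectrum_pos_of_posDef [Nonempty ι] (hA : A.PosDef) :
    0 < sInf (spectrum ℝ A) := by
  have hrange := hA.isHermitian.spectrum_real_eq_range_eigenvalues
  have hne : (spectrum ℝ A).Nonempty := hrange ▸ Set.range_nonempty _
  have hmem := hne.csInf_mem A.finite_real_spectrum
  rw [hrange] at hmem ⊢
  obtain ⟨i, hi⟩ := hmem
  exact hi ▸ hA.eigenvalues_pos i

theorem inv_le_algebraMap_inv_of_le_spectrum (hA : A.IsHermitian) {r : ℝ} (hr : 0 < r)
    (hle : ∀ a ∈ spectrum ℝ A, r ≤ a) : A⁻¹ ≤ algebraMap ℝ _ r⁻¹ := by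
  refine (le_algebraMap_iff_spectrum_le hA.inv).2 fun a ha => ?_
  have hunit : IsUnit A := spectrum.isUnit_of_zero_notMem ℝ fun h => (hle 0 h).not_gt hr
  have ha_inv : a⁻¹ ∈ spectrum ℝ A := by
    obtain ⟨u, rfl⟩ := hunit
    rwa [spectrum.inv₀_mem_iff, coe_units_inv]
  have : 0 < a⁻¹ := hr.trans_le (hle _ ha_inv)
  exact (le_inv_comm₀ hr (inv_pos.1 this)).1 (hle _ ha_inv)

theorem dotProduct_inv_mulVec_le_of_le_spectrum {A : Matrix ι ι ℝ} (hA : A.IsHermitian)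
    {r : ℝ} (hr : 0 < r) (hle : ∀ a ∈ spectrum ℝ A, r ≤ a) (y : ι → ℝ) :
    y ⬝ᵥ A⁻¹ *ᵥ y ≤ r⁻¹ * (y ⬝ᵥ y) := by
  have h := (le_iff.1 (inv_le_algebraMap_inv_of_le_spectrum hA hr hle)).dotProduct_mulVec_nonneg y
  simpa [sub_mulVec, Algebra.algebraMap_eq_smul_one, smul_mulVec] using h

end Spectrum

section InverseEigenvector

variable {K ι : Type*} [Field K] [Fintype ι] [DecidableEq ι] {A : Matrix ι ι K} {x : ι → K}
  {r : K}

theorem inv_mulVec_eq_inv_smul (hA : IsUnit A) (hr : r ≠ 0) (hAx : A *ᵥ x = r • x) :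
    A⁻¹ *ᵥ x = r⁻¹ • x := by
  rw [eq_inv_smul_iff₀ hr, ← mulVec_smul, ← hAx, mulVec_mulVec,
    nonsing_inv_mul _ ((isUnit_iff_isUnit_det A).1 hA), one_mulVec]

end InverseEigenvector

section PerronFrobenius

variable {K ι : Type*} [Field K] [LinearOrder K] [IsStrictOrderedRing K] [Fintype ι]
  {A : Matrix ι ι K} {x : ι → K} {r : K}

theorem mul_nonneg_of_dotProduct_mulVec_abs_le (hA : ∀ i j, 0 < A i j)
    (h : |x| ⬝ᵥ A *ᵥ |x| ≤ x ⬝ᵥ A *ᵥ x) (i j : ι) : 0 ≤ x i * x j := by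
  have hterm (i j : ι) : x i * (A i j * x j) ≤ |x i| * (A i j * |x j|) :=
    calc x i * (A i j * x j) ≤ |x i * (A i j * x j)| := le_abs_self _
      _ = |x i| * (A i j * |x j|) := by rw [abs_mul, abs_mul, abs_of_pos (hA i j)]
  have hrow (i : ι) : ∑ j, x i * (A i j * x j) ≤ ∑ j, |x i| * (A i j * |x j|) :=
    Finset.sum_le_sum fun j _ => hterm i j
  simp only [dotProduct, mulVec, Finset.mul_sum, Pi.abs_apply] at h
  have hrow_eq := (Finset.sum_eq_sum_iff_of_le fun i _ => hrow i).1
    ((Finset.sum_le_sum fun i _ => hrow i).antisymm h) i (Finset.mem_univ i)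
  have hterm_eq := (Finset.sum_eq_sum_iff_of_le fun j _ => hterm i j).1 hrow_eq j
    (Finset.mem_univ j)
  refine nonneg_of_mul_nonneg_right (a := A i j) ?_ (hA i j)
  calc 0 ≤ |x i| * (A i j * |x j|) := by have := hA i j; positivity
    _ = A i j * (x i * x j) := by rw [← hterm_eq]; ring

theorem pos_of_nonneg_of_mulVec_eq_smul (hA : ∀ i j, 0 < A i j) (hx : 0 ≤ x) (hx0 : x ≠ 0)
    (hAx : A *ᵥ x = r • x) (i : ι) : 0 < x i := by
  obtain ⟨p, hp⟩ := Function.ne_iff.1 hx0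
  have hpos : 0 < r * x i :=
    calc 0 < ∑ j, A i j * x j :=
          Finset.sum_pos' (fun j _ => mul_nonneg (hA i j).le (hx j))
            ⟨p, Finset.mem_univ p, mul_pos (hA i p) ((hx p).lt_of_ne' hp)⟩
      _ = r * x i := congrFun hAx i
  exact (hx i).lt_of_ne' (right_ne_zero_of_mul hpos.ne')

theorem pos_or_neg_of_mulVec_eq_smul (hA : ∀ i j, 0 < A i j)
    (hr : ∀ y, y ⬝ᵥ A *ᵥ y ≤ r * (y ⬝ᵥ y)) (hx : x ≠ 0) (hAx : A *ᵥ x = r • x) :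
    (∀ i, 0 < x i) ∨ ∀ i, x i < 0 := by
  have habs : |x| ⬝ᵥ A *ᵥ |x| ≤ x ⬝ᵥ A *ᵥ x :=
    calc |x| ⬝ᵥ A *ᵥ |x| ≤ r * (|x| ⬝ᵥ |x|) := hr |x|
      _ = r * (x ⬝ᵥ x) := by simp only [dotProduct, Pi.abs_apply, abs_mul_abs_self]
      _ = x ⬝ᵥ A *ᵥ x := by rw [hAx, dotProduct_smul, smul_eq_mul]
  have hsame := mul_nonneg_of_dotProduct_mulVec_abs_le hA habs
  obtain ⟨p, hp⟩ := Function.ne_iff.1 hx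
  rcases lt_or_gt_of_ne hp with hp | hp
  · have hneg : 0 ≤ -x := fun i => neg_nonneg.2 (nonpos_of_mul_nonneg_right (hsame p i) hp)
    have hAneg : A *ᵥ (-x) = r • -x := by rw [mulVec_neg, hAx, smul_neg]
    exact .inr fun i => neg_pos.1
      (pos_of_nonneg_of_mulVec_eq_smul hA hneg (neg_ne_zero.2 hx) hAneg i)
  · have hnonneg : 0 ≤ x := fun i => nonneg_of_mul_nonneg_left (hsame i p) hp
    exact .inl (pos_of_nonneg_of_mulVec_eq_smul hA hnonneg hx hAx)

theorem signature_mul_pos_or_neg_of_mulVec_eq_smul {s : ι → K} (hs : ∀ i, s i * s i = 1)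
    (hA : ∀ i j, 0 < s i * A i j * s j) (hr : ∀ y, y ⬝ᵥ A *ᵥ y ≤ r * (y ⬝ᵥ y)) (hx : x ≠ 0)
    (hAx : A *ᵥ x = r • x) : (∀ i, 0 < s i * x i) ∨ ∀ i, s i * x i < 0 := by
  classical
  set S := diagonal s
  have hSS : S * S = 1 := by simp [S, hs]
  have hS (y : ι → K) : S *ᵥ S *ᵥ y = y := by rw [mulVec_mulVec, hSS, one_mulVec]
  have hS_dot (y z : ι → K) : y ⬝ᵥ S *ᵥ z = S *ᵥ y ⬝ᵥ z := by
    rw [dotProduct_mulVec, ← mulVec_transpose, diagonal_transpose]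
  have hpos (i j : ι) : 0 < (S * A * S) i j := by simpa [S] using hA i j
  have hform (y : ι → K) : y ⬝ᵥ (S * A * S) *ᵥ y ≤ r * (y ⬝ᵥ y) := by
    simpa [← mulVec_mulVec, hS_dot, hS] using hr (S *ᵥ y)
  have hSx : S *ᵥ x ≠ 0 := fun h => hx (by rw [← hS x, h, mulVec_zero])
  have heig : (S * A * S) *ᵥ (S *ᵥ x) = r • S *ᵥ x := by
    rw [← mulVec_mulVec, ← mulVec_mulVec, hS, hAx, mulVec_smul]
  simpa [S, mulVec_diagonal] using pos_or_neg_of_mulVec_eq_smul hpos hform hSx heig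

end PerronFrobenius

section CauchyInverse

variable {R ι : Type*} [CommRing R] [Fintype ι] [DecidableEq ι] {v u : ι → R}
  {C M : Matrix ι ι R}

theorem commute_diagonal_mul_diagonal_mul (hC : C.IsSymm)
    (hlyap : diagonal v * C + C * diagonal v = vecMulVec 1 1) (hu : C *ᵥ u = 1) :
    Commute (diagonal v) (C * diagonal u * C) := by
  have hvC : diagonal v * C = vecMulVec 1 1 - C * diagonal v := eq_sub_of_add_eq hlyap
  have hone : diagonal u *ᵥ 1 = u := by ext; simp [mulVec_diagonal]
  have hleft : vecMulVec 1 1 * (diagonal u * C) = vecMulVec 1 1 := by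
    rw [vecMulVec_mul, ← mulVec_transpose, transpose_mul, diagonal_transpose, hC.eq,
      ← mulVec_mulVec, hone, hu]
  have hright : C * diagonal u * vecMulVec 1 1 = vecMulVec 1 1 := by
    rw [mul_vecMulVec, ← mulVec_mulVec, hone, hu]
  calc diagonal v * (C * diagonal u * C)
      = (diagonal v * C) * (diagonal u * C) := by simp only [mul_assoc]
    _ = vecMulVec 1 1 - C * (diagonal v * diagonal u) * C := by
        rw [hvC, sub_mul, hleft]; simp only [mul_assoc]
    _ = C * diagonal u * (vecMulVec 1 1 - diagonal v * C) := by
        rw [mul_sub, hright, (commute_diagonal v u).eq]; simp only [mul_assoc]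
    _ = C * diagonal u * C * diagonal v := by
        rw [hvC, sub_sub_cancel]; simp only [mul_assoc]

variable [NoZeroDivisors R]

theorem isDiag_of_commute_diagonal (hv : Function.Injective v) (h : Commute (diagonal v) M) :
    M.IsDiag := by
  intro i j hij
  have hentry : v i * M i j = M i j * v j := by
    simpa using congrFun (congrFun h.eq i) j
  have : (v i - v j) * M i j = 0 := by linear_combination hentry
  exact (mul_eq_zero.1 this).resolve_left (sub_ne_zero.2 (hv.ne hij))

theorem mul_diagonal_mul_mul_diagonal_eq_one (hv : Function.Injective v) (hC : C.IsSymm)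
    (hlyap : diagonal v * C + C * diagonal v = vecMulVec 1 1) (hu : C *ᵥ u = 1) :
    C * diagonal u * C * diagonal u = 1 := by
  have hdiag := isDiag_of_commute_diagonal hv (commute_diagonal_mul_diagonal_mul hC hlyap hu)
  obtain ⟨d, hd⟩ : ∃ d, diagonal d = C * diagonal u * C := ⟨_, hdiag.diagonal_diag⟩
  have hdu : diagonal d *ᵥ u = 1 := by
    rw [hd, ← mulVec_mulVec, hu, ← mulVec_mulVec]
    simpa [funext_iff, mulVec, dotProduct, diagonal_apply] using hu
  rw [← hd, diagonal_mul_diagonal, ← diagonal_one]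
  congr 1
  ext i
  simpa [mulVec_diagonal] using congrFun hdu i

end CauchyInverse

section CauchyWeight

variable {K ι : Type*} [Field K] [Fintype ι] [DecidableEq ι]

/-- The vector `u` solving `Ψ u = 1` for the Cauchy matrix `Ψ` with nodes `v`, in closed form:
`uᵢ = ∏ₖ (vᵢ + vₖ) / ∏_{k ≠ i} (vᵢ - vₖ)`. -/
def cauchyWeight (v : ι → K) (i : ι) : K :=
  (∏ k, (v i + v k)) * Lagrange.nodalWeight Finset.univ v i

theorem sum_cauchyWeight_div_add {v : ι → K} (hv : Function.Injective v)
    (hadd : ∀ i j, v i + v j ≠ 0) (i : ι) : ∑ k, cauchyWeight v k / (v i + v k) = 1 := by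
  -- The sum is the Lagrange interpolation formula for the leading coefficient of the monic `p`.
  let p : Polynomial K := ∏ l ∈ Finset.univ.erase i, (Polynomial.X + Polynomial.C (v l))
  have hp : p.Monic := Polynomial.monic_prod_of_monic _ _ fun l _ => Polynomial.monic_X_add_C _
  have hdeg : p.degree = (Finset.univ.erase i).card := by
    simp [p, Polynomial.degree_prod]
  have hcard : (Finset.univ : Finset ι).card = p.degree + 1 := by
    rw [hdeg, ← Finset.card_erase_add_one (Finset.mem_univ i)]
    norm_cast
  have heval (k : ι) : p.eval (v k) = (∏ l, (v k + v l)) / (v i + v k) := by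
    rw [← Finset.mul_prod_erase _ _ (Finset.mem_univ i), add_comm (v k),
      mul_div_cancel_left₀ _ (hadd i k)]
    simp [p, Polynomial.eval_prod]
  rw [← hp.leadingCoeff, Lagrange.leadingCoeff_eq_sum hv.injOn hcard]
  refine Finset.sum_congr rfl fun k _ => ?_
  rw [cauchyWeight, Lagrange.nodalWeight, Finset.prod_inv_distrib, heval]
  ring

end CauchyWeight

section AlternatingSigns

variable {K ι : Type*} [Field K] [LinearOrder K] [IsStrictOrderedRing K] [Fintype ι]
  [LinearOrder ι] [LocallyFiniteOrderTop ι] {v : ι → K}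

theorem neg_one_pow_card_Ioi_mul_nodalWeight_pos (hv : StrictMono v) (i : ι) :
    0 < (-1) ^ (Finset.Ioi i).card * Lagrange.nodalWeight Finset.univ v i := by
  have hsign : (-1 : K) ^ (Finset.Ioi i).card =
      ∏ j ∈ Finset.univ.erase i, if i < j then -1 else 1 := by
    rw [← Finset.prod_const, ← Finset.prod_filter]
    congr 1
    grind
  rw [hsign, Lagrange.nodalWeight, ← Finset.prod_mul_distrib]
  refine Finset.prod_pos fun j hj => ?_
  rcases lt_or_gt_of_ne (Finset.ne_of_mem_erase hj) with hji | hij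
  · simpa [hji.not_gt] using hv hji
  · simpa [hij, ← neg_inv] using hv hij

theorem neg_one_pow_card_Ioi_mul_cauchyWeight_pos (hpos : ∀ i, 0 < v i) (hv : StrictMono v)
    (i : ι) : 0 < (-1) ^ (Finset.Ioi i).card * cauchyWeight v i := by
  have hprod : 0 < ∏ k, (v i + v k) := Finset.prod_pos fun k _ => add_pos (hpos i) (hpos k)
  rw [cauchyWeight, mul_left_comm]
  exact mul_pos hprod (neg_one_pow_card_Ioi_mul_nodalWeight_pos hv i)

theorem neg_one_pow_mul_cauchyWeight_mul_pos {n : ℕ} {v : Fin n → K} (hpos : ∀ i, 0 < v i)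
    (hv : StrictMono v) (i j : Fin n) :
    0 < (-1) ^ (i : ℕ) * cauchyWeight v i * ((-1) ^ (j : ℕ) * cauchyWeight v j) := by
  have hparity (k : Fin n) :
      (-1 : K) ^ (Finset.Ioi k).card = (-1) ^ (n - 1) * (-1) ^ (k : ℕ) := by
    have hk : n - 1 + k = (Finset.Ioi k).card + 2 * k := by rw [Fin.card_Ioi]; lia
    rw [← pow_add, hk, pow_add, pow_mul, neg_one_sq, one_pow, mul_one]
  have hsq : ((-1 : K) ^ (n - 1)) ^ 2 = 1 := by rw [← pow_mul, mul_comm, pow_mul]; simp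
  calc 0 < (-1) ^ (Finset.Ioi i).card * cauchyWeight v i *
        ((-1) ^ (Finset.Ioi j).card * cauchyWeight v j) :=
        mul_pos (neg_one_pow_card_Ioi_mul_cauchyWeight_pos hpos hv i)
          (neg_one_pow_card_Ioi_mul_cauchyWeight_pos hpos hv j)
    _ = (-1) ^ (i : ℕ) * cauchyWeight v i * ((-1) ^ (j : ℕ) * cauchyWeight v j) := by
        rw [hparity, hparity]
        linear_combination ((-1) ^ (i : ℕ) * cauchyWeight v i *
          ((-1) ^ (j : ℕ) * cauchyWeight v j)) * hsq

end AlternatingSigns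

section CauchyMatrix

variable {n : ℕ} {lam b x : Fin n → ℝ}

theorem cauchyW_apply (lam b : Fin n → ℝ) (i j : Fin n) :
    cauchyW n lam b i j = b i * b j / (lam i + lam j) := by
  simp only [cauchyW, cauchyPsi, mul_diagonal, diagonal_mul, of_apply]
  ring

theorem isHermitian_cauchyW (lam b : Fin n → ℝ) : (cauchyW n lam b).IsHermitian := by
  ext i j
  simp [cauchyW_apply, add_comm, mul_comm]

theorem diagonal_mul_cauchyW_add_cauchyW_mul_diagonal (hadd : ∀ i j, lam i + lam j ≠ 0)
    (b : Fin n → ℝ) :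
    diagonal lam * cauchyW n lam b + cauchyW n lam b * diagonal lam = vecMulVec b b := by
  ext i j
  have := hadd i j
  simp only [Matrix.add_apply, diagonal_mul, mul_diagonal, cauchyW_apply, vecMulVec_apply]
  field_simp

theorem cauchyW_one (lam : Fin n → ℝ) : cauchyW n lam 1 = cauchyPsi n lam := by
  simp [cauchyW]

theorem cauchyPsi_mulVec_cauchyWeight (hadd : ∀ i j, lam i + lam j ≠ 0)
    (hinj : Function.Injective lam) : cauchyPsi n lam *ᵥ cauchyWeight lam = 1 := by
  ext i
  rw [Pi.one_apply, ← sum_cauchyWeight_div_add hinj hadd i]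
  simp [mulVec, dotProduct, cauchyPsi, div_eq_inv_mul]

theorem cauchyW_mul_cauchyW_cauchyWeight_div (hadd : ∀ i j, lam i + lam j ≠ 0)
    (hinj : Function.Injective lam) (hb : ∀ i, b i ≠ 0) :
    cauchyW n lam b * cauchyW n lam (cauchyWeight lam / b) = 1 := by
  have hsymm : (cauchyPsi n lam).IsSymm := by simpa [cauchyW_one] using isHermitian_cauchyW lam 1
  have hlyap := diagonal_mul_cauchyW_add_cauchyW_mul_diagonal hadd 1
  rw [cauchyW_one] at hlyap
  have hbu : diagonal b * diagonal (cauchyWeight lam / b) = diagonal (cauchyWeight lam) := by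
    simp [diagonal_mul_diagonal, mul_div_cancel₀, hb]
  have hub : diagonal (cauchyWeight lam / b) = diagonal (cauchyWeight lam) * diagonal b⁻¹ := by
    simp [diagonal_mul_diagonal, div_eq_mul_inv]
  have hbb : diagonal b * diagonal b⁻¹ = 1 := by simp [diagonal_mul_diagonal, hb]
  set u := cauchyWeight lam
  calc cauchyW n lam b * cauchyW n lam (u / b)
      = diagonal b * (cauchyPsi n lam * (diagonal b * diagonal (u / b)) * cauchyPsi n lam *
          diagonal (u / b)) := by simp only [cauchyW, mul_assoc]
    _ = diagonal b * (cauchyPsi n lam * diagonal u * cauchyPsi n lam * diagonal u) *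
          diagonal b⁻¹ := by rw [hbu, hub]; simp only [mul_assoc]
    _ = 1 := by
        rw [mul_diagonal_mul_mul_diagonal_eq_one hinj hsymm hlyap
          (cauchyPsi_mulVec_cauchyWeight hadd hinj), mul_one, hbb]

theorem posDef_cauchyW (hpos : ∀ i, 0 < lam i) (hinj : Function.Injective lam)
    (hb : ∀ i, b i ≠ 0) : (cauchyW n lam b).PosDef := by
  have hadd (i j : Fin n) : lam i + lam j ≠ 0 := (add_pos (hpos i) (hpos j)).ne'
  have hsemi : (cauchyW n lam b).PosSemidef := by
    refine posSemidef_of_posSemidef_lyapunov (isHermitian_cauchyW lam b) (.diagonal hpos) ?_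
    rw [diagonal_mul_cauchyW_add_cauchyW_mul_diagonal hadd]
    exact posSemidef_vecMulVec_self_star b
  exact hsemi.posDef_iff_isUnit.2
    (.of_mul_eq_one _ (cauchyW_mul_cauchyW_cauchyWeight_div hadd hinj hb))

theorem ne_zero_of_sInf_spectrum_cauchyW_pos (h : 0 < sInf (spectrum ℝ (cauchyW n lam b)))
    (i : Fin n) : b i ≠ 0 := by
  have hunit : IsUnit (cauchyW n lam b) := spectrum.isUnit_of_zero_notMem ℝ fun h0 =>
    (csInf_le (finite_real_spectrum.bddBelow) h0).not_gt h
  have hdet : (∏ i, b i) * (cauchyPsi n lam).det * ∏ i, b i ≠ 0 := by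
    simpa [cauchyW] using ((isUnit_iff_isUnit_det _).1 hunit).ne_zero
  exact Finset.prod_ne_zero_iff.1 (right_ne_zero_of_mul hdet) i (Finset.mem_univ i)

theorem sInf_spectrum_cauchyW_pos_of_forall_le (hn : 0 < n) (hpos : ∀ i, 0 < lam i)
    (hinj : Function.Injective lam)
    (hmax : ∀ c : Fin n → ℝ, ∑ i, c i ^ 2 = 1 →
      sInf (spectrum ℝ (cauchyW n lam c)) ≤ sInf (spectrum ℝ (cauchyW n lam b))) :
    0 < sInf (spectrum ℝ (cauchyW n lam b)) := by
  have : Nonempty (Fin n) := ⟨⟨0, hn⟩⟩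
  let c : Fin n → ℝ := fun _ => (√n)⁻¹
  have hc_unit : ∑ i, c i ^ 2 = 1 := by simp [c, hn.ne']
  have hc : ∀ i, c i ≠ 0 := fun _ => by simp [c, hn.ne']
  exact (sInf_spectrum_pos_of_posDef (posDef_cauchyW hpos hinj hc)).trans_le (hmax c hc_unit)

theorem signature_mul_cauchyW_mul_signature_pos (hpos : ∀ i, 0 < lam i) (hmono : StrictMono lam)
    (hb : ∀ i, b i ≠ 0) (i j : Fin n) :
    0 < (-1) ^ (i : ℕ) * Real.sign (b i) * cauchyW n lam (cauchyWeight lam / b) i j *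
      ((-1) ^ (j : ℕ) * Real.sign (b j)) := by
  have hsign (k : Fin n) : 0 < Real.sign (b k) / b k := by
    rw [div_eq_mul_inv, ← Real.sign_inv]
    exact Real.sign_mul_pos_of_ne_zero _ (inv_ne_zero (hb k))
  have hweight := neg_one_pow_mul_cauchyWeight_mul_pos hpos hmono i j
  calc 0 < (-1) ^ (i : ℕ) * cauchyWeight lam i * ((-1) ^ (j : ℕ) * cauchyWeight lam j) *
        (Real.sign (b i) / b i * (Real.sign (b j) / b j)) / (lam i + lam j) :=
        div_pos (mul_pos hweight (mul_pos (hsign i) (hsign j))) (add_pos (hpos i) (hpos j))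
    _ = (-1) ^ (i : ℕ) * Real.sign (b i) * cauchyW n lam (cauchyWeight lam / b) i j *
          ((-1) ^ (j : ℕ) * Real.sign (b j)) := by
        rw [cauchyW_apply, Pi.div_apply, Pi.div_apply]
        ring

theorem sign_eq_of_mul_pos {s x : ℝ} (hs : s * s = 1) (h : 0 < s * x) : Real.sign x = s := by
  rcases mul_self_eq_one_iff.1 hs with rfl | rfl
  · exact Real.sign_of_pos (by simpa using h)
  · exact Real.sign_of_neg (by simpa using h)

theorem optimal_pair_sign_pattern_general (hpos : ∀ i, 0 < lam i) (hmono : StrictMono lam)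
    (hmin : 0 < sInf (spectrum ℝ (cauchyW n lam b))) (hx : x ≠ 0)
    (hx_eig : cauchyW n lam b *ᵥ x = sInf (spectrum ℝ (cauchyW n lam b)) • x) :
    (∀ i, x i ≠ 0) ∧ (∀ i, b i ≠ 0) ∧
      ((∀ i : Fin n, Real.sign (x i) = (-1) ^ (i : ℕ) * Real.sign (b i)) ∨
        ∀ i : Fin n, Real.sign (x i) = -((-1) ^ (i : ℕ) * Real.sign (b i))) := by
  have hadd (i j : Fin n) : lam i + lam j ≠ 0 := (add_pos (hpos i) (hpos j)).ne'
  have hb := ne_zero_of_sInf_spectrum_cauchyW_pos hmin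
  have hWW := cauchyW_mul_cauchyW_cauchyWeight_div hadd hmono.injective hb
  have hform := dotProduct_inv_mulVec_le_of_le_spectrum (isHermitian_cauchyW lam b) hmin
    fun a ha => csInf_le finite_real_spectrum.bddBelow ha
  have hinv_eig := inv_mulVec_eq_inv_smul (.of_mul_eq_one _ hWW) hmin.ne' hx_eig
  rw [inv_eq_right_inv hWW] at hform hinv_eig
  have hs (i : Fin n) :
      (-1) ^ (i : ℕ) * Real.sign (b i) * ((-1) ^ (i : ℕ) * Real.sign (b i)) = 1 := by
    rcases Real.sign_apply_eq_of_ne_zero _ (hb i) with h | h <;> simp [h, ← mul_pow]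
  have hs_neg := fun i => (neg_mul_neg _ _).trans (hs i)
  rcases signature_mul_pos_or_neg_of_mulVec_eq_smul hs
    (signature_mul_cauchyW_mul_signature_pos hpos hmono hb) hform hx hinv_eig with h | h
  · exact ⟨fun i => right_ne_zero_of_mul (h i).ne', hb,
      .inl fun i => sign_eq_of_mul_pos (hs i) (h i)⟩
  · exact ⟨fun i => right_ne_zero_of_mul (h i).ne, hb,
      .inr fun i => sign_eq_of_mul_pos (hs_neg i) (by rw [neg_mul]; exact neg_pos.2 (h i))⟩

end CauchyMatrix

/-- If `b*` maximizes the smallest eigenvalue of `W(b)` over the unit sphere and `x*`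
is a unit eigenvector for the smallest eigenvalue of `W(b*)`, then all entries of `x*`
and of `b*` are nonzero and their signs interlace: `sgn(x*) = ±σ* sgn(b*)`. -/
theorem optimal_pair_sign_pattern (n : ℕ) (hn : 0 < n) (lam : Fin n → ℝ)
    (hpos : ∀ i, 0 < lam i) (hmono : StrictMono lam)
    (bstar : Fin n → ℝ) (hb_unit : ∑ i, bstar i ^ 2 = 1)
    (hb_max : ∀ b : Fin n → ℝ, ∑ i, b i ^ 2 = 1 →
      sInf (spectrum ℝ (cauchyW n lam b)) ≤ sInf (spectrum ℝ (cauchyW n lam bstar)))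
    (xstar : Fin n → ℝ) (hx_unit : ∑ i, xstar i ^ 2 = 1)
    (hx_eig : (cauchyW n lam bstar).mulVec xstar =
      sInf (spectrum ℝ (cauchyW n lam bstar)) • xstar) :
    (∀ i, xstar i ≠ 0) ∧ (∀ i, bstar i ≠ 0) ∧
      ((∀ i : Fin n, Real.sign (xstar i) = (-1 : ℝ) ^ (i : ℕ) * Real.sign (bstar i)) ∨
        (∀ i : Fin n,
          Real.sign (xstar i) = -((-1 : ℝ) ^ (i : ℕ) * Real.sign (bstar i)))) := by
  have hx : xstar ≠ 0 := by rintro rfl; simp at hx_unit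
  exact optimal_pair_sign_pattern_general hpos hmono
    (sInf_spectrum_cauchyW_pos_of_forall_le hn hpos hmono.injective hb_max) hx hx_eig
end

section
/- Let v* ∈ ℝ^n be the vector with positive entries defined by v*_i = sqrt((σ* Ψ^{-1} σ* 1)_i / (1ᵀ σ* Ψ^{-1} σ* 1)) (well defined since every entry of σ* Ψ^{-1} σ* 1 is positive). Then a unit vector b ∈ ℝ^n maximizes the smallest eigenvalue of W(b) over the unit sphere if and only if |b_i| = v*_i for all i, i.e., if and only if b = σ v* for some n×n diagonal signature matrix σ; in particular there are exactly 2^n maximizers. -/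
open Matrix BigOperators

/-- The diagonal signature matrix `σ*` with `i`-th diagonal entry `(-1)^i`. -/
noncomputable def sigmaStar (n : ℕ) : Matrix (Fin n) (Fin n) ℝ :=
  Matrix.diagonal fun i : Fin n => (-1 : ℝ) ^ (i : ℕ)

/-- The optimal actuator profile `v*`, `v*ᵢ = sqrt((σ* Ψ⁻¹ σ* 1)ᵢ / (1ᵀ σ* Ψ⁻¹ σ* 1))`. -/
noncomputable def vStar (n : ℕ) (lam : Fin n → ℝ) : Fin n → ℝ := fun i =>
  Real.sqrt
    ((sigmaStar n * (cauchyPsi n lam)⁻¹ * sigmaStar n).mulVec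
        (fun _ : Fin n => (1 : ℝ)) i /
      ((fun _ : Fin n => (1 : ℝ)) ⬝ᵥ
        (sigmaStar n * (cauchyPsi n lam)⁻¹ * sigmaStar n).mulVec
          fun _ : Fin n => (1 : ℝ)))

/-!
Let `A` be positive definite. Conjugating `A` by a signature matrix does not change the spectrum of
any `diag(b) A diag(b)`, so if the signs of the entries of `A⁻¹` can be removed by such a
conjugation, one may assume that `A⁻¹` is entrywise nonnegative. Let `w` be the vector of row sums
of `A⁻¹`, scaled to have total `1`.

Testing the Rayleigh quotient of `diag(b) A diag(b)` at `w / b` bounds its smallest eigenvalue by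
`(1ᵀ A⁻¹ 1)⁻¹`, and equality in Cauchy–Schwarz forces `bᵢ² = wᵢ`. Conversely, `diag(A⁻¹ 1) - A⁻¹` is
a graph Laplacian with nonnegative weights, hence positive semidefinite; since inversion reverses
the Loewner order, `A ≥ diag(A⁻¹ 1)⁻¹`, and the bound is attained when `bᵢ² = wᵢ`.

For a Cauchy matrix with increasing nodes the minors are again Cauchy determinants, all positive, so
by Cramer's rule the entries of the inverse have checkerboard signs.
-/

section CauchyMatrix

variable {K : Type*} [Field K]

/-- The Cauchy matrix with nodes `x` and `y`, in the sign convention `1 / (xᵢ + yⱼ)`. -/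
def cauchyMatrix {m n : Type*} (x : m → K) (y : n → K) : Matrix m n K :=
  Matrix.of fun i j => 1 / (x i + y j)

/-- The Schur complement of the top left entry, i.e. what Gaussian elimination with pivot `A 0 0`
leaves in the remaining rows and columns. It is meaningful only for `A 0 0 ≠ 0`. -/
def pivotComplement {n : ℕ} (A : Matrix (Fin (n + 1)) (Fin (n + 1)) K) :
    Matrix (Fin n) (Fin n) K :=
  Matrix.of fun i j => A i.succ j.succ - A i.succ 0 * (A 0 0)⁻¹ * A 0 j.succ

theorem det_eq_mul_det_pivotComplement {n : ℕ} {A : Matrix (Fin (n + 1)) (Fin (n + 1)) K}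
    (hA : A 0 0 ≠ 0) : A.det = A 0 0 * (pivotComplement A).det := by
  let c : Fin (n + 1) → K := Fin.cons 0 fun i => A i.succ 0 * (A 0 0)⁻¹
  let E : Matrix (Fin (n + 1)) (Fin (n + 1)) K := Matrix.of fun i j => A i j - c i * A 0 j
  have hdet : A.det = E.det :=
    Matrix.det_eq_of_forall_row_eq_smul_add_const c 0 rfl fun i j => by simp [E, c]
  rw [hdet, Matrix.det_succ_column_zero, Fin.sum_univ_succ]
  have hcol (i : Fin n) : E i.succ 0 = 0 := by simp [E, c, hA]
  have hsub : E.submatrix (Fin.succAbove 0) Fin.succ = pivotComplement A := by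
    ext i j
    simp [E, c, pivotComplement]
  simp only [hcol, hsub, mul_zero, zero_mul, Finset.sum_const_zero, add_zero]
  simp [E, c]

theorem posSemidef_of_pivotComplement {n : ℕ} {A : Matrix (Fin (n + 1)) (Fin (n + 1)) ℝ}
    (hA : A.IsHermitian) (h0 : 0 < A 0 0) (hS : (pivotComplement A).PosSemidef) :
    A.PosSemidef := by
  let P : Matrix (Fin (n + 1)) (Fin n) ℝ := (1 : Matrix _ _ ℝ).submatrix id Fin.succ
  have hne : A 0 0 ≠ 0 := h0.ne'
  have hsymm (i) : A i 0 = A 0 i := (hA.apply i 0).symm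
  have hsplit : A =
      (A 0 0)⁻¹ • Matrix.vecMulVec (A 0) (star (A 0)) + P * pivotComplement A * Pᴴ := by
    ext i j
    cases i using Fin.cases <;> cases j using Fin.cases <;>
      simp [P, pivotComplement, Matrix.mul_apply, Matrix.one_apply, Matrix.vecMulVec_apply, hne,
        (Fin.succ_ne_zero _).symm, hsymm] <;>
      field_simp
    ring
  rw [hsplit]
  exact ((Matrix.posSemidef_vecMulVec_self_star _).smul (inv_nonneg.mpr h0.le)).add
    (hS.mul_mul_conjTranspose_same P)

theorem pivotComplement_cauchyMatrix {n : ℕ} {x y : Fin (n + 1) → K}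
    (h : ∀ i j, x i + y j ≠ 0) :
    pivotComplement (cauchyMatrix x y) =
      Matrix.diagonal (fun i => (x i.succ - x 0) / (x i.succ + y 0)) *
        cauchyMatrix (x ∘ Fin.succ) (y ∘ Fin.succ) *
        Matrix.diagonal fun j => (y j.succ - y 0) / (x 0 + y j.succ) := by
  ext i j
  have hᵢ₀ := h i.succ 0
  have h₀ⱼ := h 0 j.succ
  have hᵢⱼ := h i.succ j.succ
  simp only [pivotComplement, cauchyMatrix, Matrix.of_apply, Matrix.mul_diagonal,
    Matrix.diagonal_mul, Function.comp_apply]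
  field_simp
  ring

section Ordered

variable [LinearOrder K] [IsStrictOrderedRing K]

theorem det_cauchyMatrix_pos : ∀ {n : ℕ} {x y : Fin n → K}, (∀ i j, 0 < x i + y j) →
    StrictMono x → StrictMono y → 0 < (cauchyMatrix x y).det
  | 0, _, _, _, _, _ => by simp
  | n + 1, x, y, h, hx, hy => by
    have h₀₀ : 0 < cauchyMatrix x y 0 0 := one_div_pos.mpr (h 0 0)
    rw [det_eq_mul_det_pivotComplement h₀₀.ne',
      pivotComplement_cauchyMatrix fun i j => (h i j).ne', Matrix.det_mul, Matrix.det_mul,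
      Matrix.det_diagonal, Matrix.det_diagonal]
    have hrow : 0 < ∏ i : Fin n, (x i.succ - x 0) / (x i.succ + y 0) :=
      Finset.prod_pos fun i _ => div_pos (sub_pos.mpr (hx i.succ_pos)) (h _ _)
    have hcol : 0 < ∏ j : Fin n, (y j.succ - y 0) / (x 0 + y j.succ) :=
      Finset.prod_pos fun j _ => div_pos (sub_pos.mpr (hy j.succ_pos)) (h _ _)
    have htail := det_cauchyMatrix_pos (fun i j => h i.succ j.succ)
      (hx.comp Fin.strictMono_succ) (hy.comp Fin.strictMono_succ)
    exact mul_pos h₀₀ (mul_pos (mul_pos hrow htail) hcol)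

theorem inv_cauchyMatrix_checkerboard {n : ℕ} {x y : Fin n → K} (h : ∀ i j, 0 < x i + y j)
    (hx : StrictMono x) (hy : StrictMono y) (i j : Fin n) :
    0 < (-1) ^ (i : ℕ) * (cauchyMatrix x y)⁻¹ i j * (-1) ^ (j : ℕ) := by
  obtain _ | n := n
  · exact i.elim0
  have hminor : 0 < ((cauchyMatrix x y).submatrix j.succAbove i.succAbove).det :=
    det_cauchyMatrix_pos (fun _ _ => h _ _) (hx.comp (Fin.strictMono_succAbove j))
      (hy.comp (Fin.strictMono_succAbove i))
  have hsign (k : ℕ) : (-1 : K) ^ k * (-1) ^ k = 1 := by rw [← mul_pow]; simp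
  have hentry : (-1) ^ (i : ℕ) * (cauchyMatrix x y)⁻¹ i j * (-1) ^ (j : ℕ) =
      (cauchyMatrix x y).det⁻¹ * ((cauchyMatrix x y).submatrix j.succAbove i.succAbove).det := by
    rw [Matrix.inv_def, Matrix.smul_apply, Matrix.adjugate_fin_succ_eq_det_submatrix,
      Ring.inverse_eq_inv', smul_eq_mul, pow_add]
    linear_combination (cauchyMatrix x y).det⁻¹ *
      ((cauchyMatrix x y).submatrix j.succAbove i.succAbove).det *
      ((-1) ^ (j : ℕ) * (-1) ^ (j : ℕ) * hsign i + hsign j)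
  rw [hentry]
  exact mul_pos (inv_pos.mpr (det_cauchyMatrix_pos h hx hy)) hminor

end Ordered

theorem isHermitian_cauchyMatrix {ι : Type*} (x : ι → ℝ) : (cauchyMatrix x x).IsHermitian := by
  ext i j
  simp [cauchyMatrix, add_comm]

theorem posSemidef_cauchyMatrix : ∀ {n : ℕ} {x : Fin n → ℝ}, (∀ i, 0 < x i) →
    (cauchyMatrix x x).PosSemidef
  | 0, _, _ => by
    rw [Subsingleton.elim (cauchyMatrix _ _) 0]
    exact Matrix.PosSemidef.zero
  | n + 1, x, hx => by
    refine posSemidef_of_pivotComplement (isHermitian_cauchyMatrix x)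
      (one_div_pos.mpr (add_pos (hx 0) (hx 0))) ?_
    rw [pivotComplement_cauchyMatrix fun i j => (add_pos (hx i) (hx j)).ne']
    have hscaled := (posSemidef_cauchyMatrix fun i : Fin n => hx i.succ).mul_mul_conjTranspose_same
      (Matrix.diagonal fun i : Fin n => (x i.succ - x 0) / (x i.succ + x 0))
    rw [Matrix.diagonal_conjTranspose, star_trivial] at hscaled
    simpa only [add_comm (x 0), Function.comp_def] using hscaled

theorem posDef_cauchyMatrix {n : ℕ} {x : Fin n → ℝ} (hpos : ∀ i, 0 < x i) (hx : StrictMono x) :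
    (cauchyMatrix x x).PosDef :=
  (posSemidef_cauchyMatrix hpos).posDef_iff_det_ne_zero.mpr
    (det_cauchyMatrix_pos (fun i j => add_pos (hpos i) (hpos j)) hx hx).ne'

end CauchyMatrix

section MinEigenvalue

variable {ι : Type*} [Fintype ι] [DecidableEq ι] {A : Matrix ι ι ℝ} {b w : ι → ℝ}

open scoped MatrixOrder in
theorem le_sInf_spectrum_iff [Nonempty ι] (hA : A.IsHermitian) {t : ℝ} :
    t ≤ sInf (spectrum ℝ A) ↔ ∀ x, t * (x ⬝ᵥ x) ≤ x ⬝ᵥ A *ᵥ x := by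
  have hspec := hA.spectrum_real_eq_range_eigenvalues
  have hbdd : BddBelow (spectrum ℝ A) := hspec ▸ (Set.finite_range _).bddBelow
  have hne : (spectrum ℝ A).Nonempty := hspec ▸ Set.range_nonempty _
  have hherm : (A - algebraMap ℝ _ t).IsHermitian :=
    hA.sub (Matrix.isHermitian_diagonal_of_self_adjoint _ (.all _))
  have hform (x : ι → ℝ) :
      x ⬝ᵥ (A - algebraMap ℝ _ t) *ᵥ x = x ⬝ᵥ A *ᵥ x - t * (x ⬝ᵥ x) := by
    rw [Algebra.algebraMap_eq_smul_one, Matrix.sub_mulVec, Matrix.smul_mulVec, Matrix.one_mulVec,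
      dotProduct_sub, dotProduct_smul, smul_eq_mul]
  rw [le_csInf_iff hbdd hne]
  change (∀ r ∈ spectrum ℝ A, t ≤ r) ↔ _
  rw [← algebraMap_le_iff_le_spectrum hA.isSelfAdjoint, Matrix.le_iff,
    Matrix.posSemidef_iff_dotProduct_mulVec, and_iff_right hherm]
  simp only [star_trivial, hform, sub_nonneg]

theorem dotProduct_diagonal_mul_mul_diagonal_mulVec {R : Type*} [CommSemiring R]
    (A : Matrix ι ι R) (b x : ι → R) :
    x ⬝ᵥ (Matrix.diagonal b * A * Matrix.diagonal b) *ᵥ x = (b * x) ⬝ᵥ A *ᵥ (b * x) := by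
  have hdiag : Matrix.diagonal b *ᵥ x = b * x := funext (Matrix.mulVec_diagonal b x)
  rw [← Matrix.mulVec_mulVec, ← Matrix.mulVec_mulVec, hdiag, Matrix.dotProduct_mulVec,
    ← Matrix.mulVec_transpose, Matrix.diagonal_transpose, hdiag]

theorem isHermitian_diagonal_mul_mul_diagonal (hA : A.IsHermitian) (b : ι → ℝ) :
    (Matrix.diagonal b * A * Matrix.diagonal b).IsHermitian := by
  simpa [Matrix.diagonal_conjTranspose] using
    Matrix.isHermitian_mul_mul_conjTranspose (Matrix.diagonal b) hA

theorem ne_zero_of_sInf_spectrum_pos (hA : A.IsHermitian)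
    (h : 0 < sInf (spectrum ℝ (Matrix.diagonal b * A * Matrix.diagonal b))) (i : ι) :
    b i ≠ 0 := by
  intro hi
  have : Nonempty ι := ⟨i⟩
  have hle := (le_sInf_spectrum_iff (isHermitian_diagonal_mul_mul_diagonal hA b)).mp le_rfl
    (Pi.single i 1)
  have hzero : b * Pi.single i 1 = 0 := by
    ext j
    obtain rfl | hj := eq_or_ne j i <;> simp [*]
  rw [dotProduct_diagonal_mul_mul_diagonal_mulVec, hzero] at hle
  simp only [dotProduct_single, Pi.single_eq_same, mul_one, zero_dotProduct] at hle
  exact hle.not_gt h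

/- Evaluate the Rayleigh quotient at `w / b`; the excess of `∑ (wᵢ / bᵢ)²` over its Cauchy–Schwarz
lower bound `1` is the sum of squares on the left. -/
theorem sInf_spectrum_mul_one_add_le (hA : A.IsHermitian) (hb : ∑ i, b i ^ 2 = 1)
    (hb₀ : ∀ i, b i ≠ 0) (hw : ∑ i, w i = 1) :
    sInf (spectrum ℝ (Matrix.diagonal b * A * Matrix.diagonal b)) *
        (1 + ∑ i, (w i / b i - b i) ^ 2) ≤ w ⬝ᵥ A *ᵥ w := by
  have : Nonempty ι := by
    by_contra hempty
    simp [not_nonempty_iff.mp hempty] at hw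
  have hcancel : b * (w / b) = w := funext fun i => mul_div_cancel₀ (w i) (hb₀ i)
  have hnorm : (w / b) ⬝ᵥ (w / b) = 1 + ∑ i, (w i / b i - b i) ^ 2 := by
    have hterm (i : ι) : (w i / b i - b i) ^ 2 = w i / b i * (w i / b i) - 2 * w i + b i ^ 2 := by
      have := hb₀ i
      field_simp
      ring
    simp only [hterm, Finset.sum_add_distrib, Finset.sum_sub_distrib, ← Finset.mul_sum, hb, hw,
      dotProduct, Pi.div_apply]
    ring
  have hle := (le_sInf_spectrum_iff (isHermitian_diagonal_mul_mul_diagonal hA b)).mp le_rfl (w / b)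
  rwa [dotProduct_diagonal_mul_mul_diagonal_mulVec, hcancel, hnorm] at hle

theorem sInf_spectrum_diagonal_mul_mul_diagonal_le (hA : A.PosSemidef) (hb : ∑ i, b i ^ 2 = 1)
    (hw : ∑ i, w i = 1) :
    sInf (spectrum ℝ (Matrix.diagonal b * A * Matrix.diagonal b)) ≤ w ⬝ᵥ A *ᵥ w := by
  set m := sInf (spectrum ℝ (Matrix.diagonal b * A * Matrix.diagonal b))
  obtain hm | hm := le_or_gt m 0
  · exact hm.trans (hA.dotProduct_mulVec_nonneg w)
  · refine le_trans ?_
      (sInf_spectrum_mul_one_add_le hA.1 hb (ne_zero_of_sInf_spectrum_pos hA.1 hm) hw)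
    exact le_mul_of_one_le_right hm.le
      (le_add_of_nonneg_right (Finset.sum_nonneg fun i _ => sq_nonneg _))

theorem sq_eq_of_le_sInf_spectrum (hA : A.IsHermitian) (hb : ∑ i, b i ^ 2 = 1)
    (hw : ∑ i, w i = 1) (hpos : 0 < w ⬝ᵥ A *ᵥ w)
    (hle : w ⬝ᵥ A *ᵥ w ≤ sInf (spectrum ℝ (Matrix.diagonal b * A * Matrix.diagonal b))) (i : ι) :
    b i ^ 2 = w i := by
  set m := sInf (spectrum ℝ (Matrix.diagonal b * A * Matrix.diagonal b))
  have hm : 0 < m := hpos.trans_le hle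
  have hb₀ := ne_zero_of_sInf_spectrum_pos hA hm
  have hsum_nonpos : ∑ i, (w i / b i - b i) ^ 2 ≤ 0 := by
    have := sInf_spectrum_mul_one_add_le hA hb hb₀ hw
    exact nonpos_of_mul_nonpos_right (by linarith) hm
  have hzero : (w i / b i - b i) ^ 2 = 0 :=
    (Finset.sum_eq_zero_iff_of_nonneg fun i _ => sq_nonneg _).mp
      (hsum_nonpos.antisymm (Finset.sum_nonneg fun i _ => sq_nonneg _)) i (Finset.mem_univ i)
  rw [sq, ← eq_div_iff (hb₀ i)]
  exact (sub_eq_zero.mp (sq_eq_zero_iff.mp hzero)).symm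

end MinEigenvalue

section InverseNonnegative

variable {ι : Type*} [Fintype ι] {A M : Matrix ι ι ℝ}

theorem mulVec_one_apply {κ R : Type*} [NonAssocSemiring R] (M : Matrix κ ι R) (i : κ) :
    (M *ᵥ 1) i = ∑ j, M i j :=
  dotProduct_one (M i)

theorem mulVec_one_pos [DecidableEq ι] (hM : IsUnit M) (hnonneg : ∀ i j, 0 ≤ M i j) (i : ι) :
    0 < (M *ᵥ 1) i := by
  rw [mulVec_one_apply]
  refine (Finset.sum_nonneg fun j _ => hnonneg i j).lt_of_ne fun hsum => ?_
  have hrow := (Finset.sum_eq_zero_iff_of_nonneg fun j _ => hnonneg i j).mp hsum.symm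
  exact ((Matrix.isUnit_iff_isUnit_det M).mp hM).ne_zero
    (Matrix.det_eq_zero_of_row_eq_zero i fun j => hrow j (Finset.mem_univ j))

-- The difference of the two sides is the Laplacian form `½ ∑ Mᵢⱼ (yᵢ - yⱼ)²`.
theorem dotProduct_mulVec_le_sum_mulVec_one_mul_sq (hM : M.IsHermitian)
    (hnonneg : ∀ i j, 0 ≤ M i j) (y : ι → ℝ) :
    y ⬝ᵥ M *ᵥ y ≤ ∑ i, (M *ᵥ 1) i * y i ^ 2 := by
  have hsymm (i j : ι) : M i j = M j i := hM.apply j i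
  have hrows : ∑ i, (M *ᵥ 1) i * y i ^ 2 = ∑ i, ∑ j, M i j * y i ^ 2 := by
    simp only [mulVec_one_apply, Finset.sum_mul]
  have hcols : ∑ i, (M *ᵥ 1) i * y i ^ 2 = ∑ i, ∑ j, M i j * y j ^ 2 := by
    rw [hrows, Finset.sum_comm]
    exact Finset.sum_congr rfl fun i _ => Finset.sum_congr rfl fun j _ => by rw [hsymm]
  have hform : y ⬝ᵥ M *ᵥ y = ∑ i, ∑ j, M i j * (y i * y j) := by
    simp only [dotProduct, Matrix.mulVec, Finset.mul_sum]
    exact Finset.sum_congr rfl fun i _ => Finset.sum_congr rfl fun j _ => by ring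
  have hamgm : 2 * ∑ i, ∑ j, M i j * (y i * y j) ≤
      ∑ i, ∑ j, M i j * y i ^ 2 + ∑ i, ∑ j, M i j * y j ^ 2 := by
    simp only [Finset.mul_sum, ← Finset.sum_add_distrib]
    gcongr with i _ j _
    nlinarith [mul_nonneg (hnonneg i j) (sq_nonneg (y i - y j))]
  linarith

theorem two_mul_dotProduct_le_add [DecidableEq ι] (hA : A.PosDef) (x y : ι → ℝ) :
    2 * (x ⬝ᵥ y) ≤ x ⬝ᵥ A *ᵥ x + y ⬝ᵥ A⁻¹ *ᵥ y := by
  have hunit := (Matrix.isUnit_iff_isUnit_det A).mp hA.isUnit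
  have hAinv : A *ᵥ A⁻¹ *ᵥ y = y := by
    rw [Matrix.mulVec_mulVec, Matrix.mul_nonsing_inv A hunit, Matrix.one_mulVec]
  have hcross : (A⁻¹ *ᵥ y) ⬝ᵥ A *ᵥ x = x ⬝ᵥ y := by
    rw [Matrix.dotProduct_mulVec, ← Matrix.mulVec_transpose,
      ← Matrix.conjTranspose_eq_transpose_of_trivial, hA.1.eq, hAinv, dotProduct_comm]
  have hnonneg := hA.posSemidef.dotProduct_mulVec_nonneg (x - A⁻¹ *ᵥ y)
  rw [star_trivial, Matrix.mulVec_sub, hAinv, dotProduct_sub, sub_dotProduct, sub_dotProduct,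
    hcross, dotProduct_comm (A⁻¹ *ᵥ y)] at hnonneg
  linarith

theorem sum_sq_div_mulVec_one_le [DecidableEq ι] (hA : A.PosDef) (hnonneg : ∀ i j, 0 ≤ A⁻¹ i j)
    (z : ι → ℝ) : ∑ i, z i ^ 2 / (A⁻¹ *ᵥ 1) i ≤ z ⬝ᵥ A *ᵥ z := by
  have hu := mulVec_one_pos hA.inv.isUnit hnonneg
  let y : ι → ℝ := z / (A⁻¹ *ᵥ 1)
  have hzy : z ⬝ᵥ y = ∑ i, z i ^ 2 / (A⁻¹ *ᵥ 1) i := by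
    simp only [dotProduct, y, Pi.div_apply, sq, mul_div_assoc]
  have huy : ∑ i, (A⁻¹ *ᵥ 1) i * y i ^ 2 = ∑ i, z i ^ 2 / (A⁻¹ *ᵥ 1) i := by
    refine Finset.sum_congr rfl fun i _ => ?_
    have := (hu i).ne'
    simp only [y, Pi.div_apply]
    field_simp
  have hyoung := two_mul_dotProduct_le_add hA z y
  have hlaplacian := dotProduct_mulVec_le_sum_mulVec_one_mul_sq hA.inv.1 hnonneg y
  linarith

end InverseNonnegative

section EquilibriumWeight

variable {ι : Type*} [Fintype ι]

/-- The row sums of `M`, scaled to have total `1`. For `M = A⁻¹` with `A` positive definite this is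
the minimizer of `w ↦ w ⬝ᵥ A *ᵥ w` among vectors of total `1`. It is junk when the entries of `M`
sum to `0`. -/
noncomputable def normalizedRowSum (M : Matrix ι ι ℝ) (i : ι) : ℝ :=
  (M *ᵥ 1) i / (1 ⬝ᵥ M *ᵥ 1)

theorem normalizedRowSum_eq_smul (M : Matrix ι ι ℝ) :
    normalizedRowSum M = ((1 : ι → ℝ) ⬝ᵥ M *ᵥ 1)⁻¹ • (M *ᵥ 1) :=
  funext fun _ => div_eq_inv_mul _ _

variable [Nonempty ι] {A M : Matrix ι ι ℝ}

theorem one_dotProduct_mulVec_one_pos (hM : M.PosDef) : 0 < (1 : ι → ℝ) ⬝ᵥ M *ᵥ 1 :=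
  hM.dotProduct_mulVec_pos one_ne_zero

theorem sum_normalizedRowSum (hM : M.PosDef) : ∑ i, normalizedRowSum M i = 1 := by
  rw [← one_dotProduct, normalizedRowSum_eq_smul, dotProduct_smul, smul_eq_mul,
    inv_mul_cancel₀ (one_dotProduct_mulVec_one_pos hM).ne']

theorem normalizedRowSum_pos (hM : M.PosDef) (hnonneg : ∀ i j, 0 ≤ M i j) (i : ι) :
    0 < normalizedRowSum M i :=
  open scoped Classical in
  div_pos (mulVec_one_pos hM.isUnit hnonneg i) (one_dotProduct_mulVec_one_pos hM)

variable [DecidableEq ι]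

theorem normalizedRowSum_inv_dotProduct_mulVec (hA : A.PosDef) :
    normalizedRowSum A⁻¹ ⬝ᵥ A *ᵥ normalizedRowSum A⁻¹ = ((1 : ι → ℝ) ⬝ᵥ A⁻¹ *ᵥ 1)⁻¹ := by
  have hA_normalizedRowSum :
      A *ᵥ normalizedRowSum A⁻¹ = ((1 : ι → ℝ) ⬝ᵥ A⁻¹ *ᵥ 1)⁻¹ • 1 := by
    rw [normalizedRowSum_eq_smul, Matrix.mulVec_smul, Matrix.mulVec_mulVec,
      Matrix.mul_nonsing_inv A ((Matrix.isUnit_iff_isUnit_det A).mp hA.isUnit), Matrix.one_mulVec]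
  rw [hA_normalizedRowSum, dotProduct_smul, dotProduct_one, sum_normalizedRowSum hA.inv,
    smul_eq_mul, mul_one]

theorem le_sInf_spectrum_of_sq_eq_normalizedRowSum (hA : A.PosDef) (hnonneg : ∀ i j, 0 ≤ A⁻¹ i j)
    {b : ι → ℝ} (hb : ∀ i, b i ^ 2 = normalizedRowSum A⁻¹ i) :
    ((1 : ι → ℝ) ⬝ᵥ A⁻¹ *ᵥ 1)⁻¹ ≤
      sInf (spectrum ℝ (Matrix.diagonal b * A * Matrix.diagonal b)) := by
  refine (le_sInf_spectrum_iff (isHermitian_diagonal_mul_mul_diagonal hA.1 b)).mpr fun x => ?_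
  rw [dotProduct_diagonal_mul_mul_diagonal_mulVec]
  refine le_of_eq_of_le ?_ (sum_sq_div_mulVec_one_le hA hnonneg (b * x))
  have hnorm : x ⬝ᵥ x = ∑ i, x i * x i := rfl
  rw [hnorm, Finset.mul_sum]
  refine Finset.sum_congr rfl fun i _ => ?_
  have hrow := (mulVec_one_pos hA.inv.isUnit hnonneg i).ne'
  rw [Pi.mul_apply, mul_pow, hb, normalizedRowSum_eq_smul, Pi.smul_apply, smul_eq_mul]
  field_simp

end EquilibriumWeight

section Signatures

variable {ι : Type*} [Fintype ι] [DecidableEq ι] {R : Type*} [CommRing R] {s : ι → R}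

theorem diagonal_mul_diagonal_eq_one (hs : ∀ i, s i = 1 ∨ s i = -1) :
    Matrix.diagonal s * Matrix.diagonal s = 1 := by
  rw [Matrix.diagonal_mul_diagonal, ← Matrix.diagonal_one]
  exact congrArg Matrix.diagonal (funext fun i => by obtain h | h := hs i <;> simp [h])

theorem inv_diagonal_mul_mul_diagonal (hs : ∀ i, s i = 1 ∨ s i = -1) (A : Matrix ι ι R) :
    (Matrix.diagonal s * A * Matrix.diagonal s)⁻¹ =
      Matrix.diagonal s * A⁻¹ * Matrix.diagonal s := by
  rw [Matrix.mul_inv_rev, Matrix.mul_inv_rev,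
    Matrix.inv_eq_left_inv (diagonal_mul_diagonal_eq_one hs), Matrix.mul_assoc]

theorem spectrum_diagonal_mul_mul_diagonal (hs : ∀ i, s i = 1 ∨ s i = -1) (A : Matrix ι ι R) :
    spectrum R (Matrix.diagonal s * A * Matrix.diagonal s) = spectrum R A :=
  have hsq := diagonal_mul_diagonal_eq_one hs
  spectrum.units_conjugate (u := ⟨Matrix.diagonal s, Matrix.diagonal s, hsq, hsq⟩)

theorem posDef_diagonal_mul_mul_diagonal {s : ι → ℝ} {A : Matrix ι ι ℝ}
    (hs : ∀ i, s i = 1 ∨ s i = -1) (hA : A.PosDef) :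
    (Matrix.diagonal s * A * Matrix.diagonal s).PosDef := by
  have hunit : IsUnit (Matrix.diagonal s) := .of_mul_eq_one _ (diagonal_mul_diagonal_eq_one hs)
  simpa [Matrix.star_eq_conjTranspose, Matrix.diagonal_conjTranspose] using
    (Matrix.IsUnit.posDef_star_right_conjugate_iff hunit).mpr hA

end Signatures

theorem forall_abs_eq_iff_exists_signature {ι : Type*} {b v : ι → ℝ} (hv : ∀ i, 0 ≤ v i) :
    (∀ i, |b i| = v i) ↔
      ∃ ε : ι → ℝ, (∀ i, ε i = 1 ∨ ε i = -1) ∧ b = fun i => ε i * v i := by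
  have hcoord (i : ι) : |b i| = v i ↔ ∃ ε : ℝ, (ε = 1 ∨ ε = -1) ∧ b i = ε * v i := by
    simp [abs_eq (hv i), or_and_right, exists_or]
  simp only [hcoord, Classical.skolem, forall_and, funext_iff]

theorem ncard_setOf_forall_abs_eq {ι : Type*} [Fintype ι] {v : ι → ℝ} (hv : ∀ i, 0 < v i) :
    {b : ι → ℝ | ∀ i, |b i| = v i}.ncard = 2 ^ Fintype.card ι := by
  classical
  have hset : {b : ι → ℝ | ∀ i, |b i| = v i} = Fintype.piFinset fun i => {v i, -v i} := by
    ext b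
    simp [abs_eq (hv _).le]
  have hcard (i : ι) : ({v i, -v i} : Finset ℝ).card = 2 :=
    Finset.card_pair (self_ne_neg.mpr (hv i).ne')
  rw [hset, Set.ncard_coe_finset, Fintype.card_piFinset]
  simp only [hcard, Finset.prod_const, Finset.card_univ]

section Maximizers

variable {ι : Type*} [Fintype ι] [DecidableEq ι] {A : Matrix ι ι ℝ} {b s v : ι → ℝ}

/-- The vector `b` maximizes the smallest eigenvalue of `diag(b) A diag(b)` over the unit sphere;
that `b` itself lies on the sphere is not part of the definition. -/
def IsMinEigenvalueMaximizer (A : Matrix ι ι ℝ) (b : ι → ℝ) : Prop :=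
  ∀ b' : ι → ℝ, ∑ i, b' i ^ 2 = 1 →
    sInf (spectrum ℝ (Matrix.diagonal b' * A * Matrix.diagonal b')) ≤
      sInf (spectrum ℝ (Matrix.diagonal b * A * Matrix.diagonal b))

theorem isMinEigenvalueMaximizer_iff_sq_eq [Nonempty ι] (hA : A.PosDef)
    (hnonneg : ∀ i j, 0 ≤ A⁻¹ i j) (hb : ∑ i, b i ^ 2 = 1) :
    IsMinEigenvalueMaximizer A b ↔ ∀ i, b i ^ 2 = normalizedRowSum A⁻¹ i := by
  have hw := sum_normalizedRowSum hA.inv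
  have henergy := normalizedRowSum_inv_dotProduct_mulVec hA
  constructor
  · intro hmax
    let v : ι → ℝ := fun i => √(normalizedRowSum A⁻¹ i)
    have hv (i : ι) : v i ^ 2 = normalizedRowSum A⁻¹ i :=
      Real.sq_sqrt (normalizedRowSum_pos hA.inv hnonneg i).le
    refine sq_eq_of_le_sInf_spectrum hA.1 hb hw
      (henergy ▸ inv_pos.mpr (one_dotProduct_mulVec_one_pos hA.inv)) ?_
    rw [henergy]
    exact (le_sInf_spectrum_of_sq_eq_normalizedRowSum hA hnonneg hv).trans
      (hmax v (by simpa only [hv] using hw))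
  · intro hsq b' hb'
    calc sInf (spectrum ℝ (Matrix.diagonal b' * A * Matrix.diagonal b'))
        ≤ ((1 : ι → ℝ) ⬝ᵥ A⁻¹ *ᵥ 1)⁻¹ :=
          henergy ▸ sInf_spectrum_diagonal_mul_mul_diagonal_le hA.posSemidef hb' hw
      _ ≤ sInf (spectrum ℝ (Matrix.diagonal b * A * Matrix.diagonal b)) :=
          le_sInf_spectrum_of_sq_eq_normalizedRowSum hA hnonneg hsq

theorem isMinEigenvalueMaximizer_diagonal_mul_mul_diagonal_iff (hs : ∀ i, s i = 1 ∨ s i = -1) :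
    IsMinEigenvalueMaximizer (Matrix.diagonal s * A * Matrix.diagonal s) b ↔
      IsMinEigenvalueMaximizer A b := by
  have hcomm (c : ι → ℝ) :
      Matrix.diagonal c * (Matrix.diagonal s * A * Matrix.diagonal s) * Matrix.diagonal c =
        Matrix.diagonal s * (Matrix.diagonal c * A * Matrix.diagonal c) * Matrix.diagonal s := by
    ext i j
    simp only [Matrix.mul_diagonal, Matrix.diagonal_mul]
    ring
  simp only [IsMinEigenvalueMaximizer, hcomm, spectrum_diagonal_mul_mul_diagonal hs]

theorem maximizers_characterization_general [Nonempty ι] (hA : A.PosDef)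
    (hs : ∀ i, s i = 1 ∨ s i = -1) (hnonneg : ∀ i j, 0 ≤ s i * A⁻¹ i j * s j)
    (hv : ∀ i, v i = √(normalizedRowSum (Matrix.diagonal s * A⁻¹ * Matrix.diagonal s) i)) :
    (∀ b : ι → ℝ, ∑ i, b i ^ 2 = 1 →
      (IsMinEigenvalueMaximizer A b ↔ ∀ i, |b i| = v i) ∧
      (IsMinEigenvalueMaximizer A b ↔
        ∃ ε : ι → ℝ, (∀ i, ε i = 1 ∨ ε i = -1) ∧ b = fun i => ε i * v i)) ∧
    {b : ι → ℝ | ∑ i, b i ^ 2 = 1 ∧ IsMinEigenvalueMaximizer A b}.ncard = 2 ^ Fintype.card ι := by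
  let B := Matrix.diagonal s * A * Matrix.diagonal s
  have hBinv : B⁻¹ = Matrix.diagonal s * A⁻¹ * Matrix.diagonal s :=
    inv_diagonal_mul_mul_diagonal hs A
  have hB : B.PosDef := posDef_diagonal_mul_mul_diagonal hs hA
  have hBnonneg (i j : ι) : 0 ≤ B⁻¹ i j := by
    simpa only [hBinv, Matrix.mul_diagonal, Matrix.diagonal_mul] using hnonneg i j
  rw [← hBinv] at hv
  have hwpos := normalizedRowSum_pos hB.inv hBnonneg
  have hvpos (i : ι) : 0 < v i := hv i ▸ Real.sqrt_pos.mpr (hwpos i)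
  have habs (b : ι → ℝ) : (∀ i, |b i| = v i) ↔ ∀ i, b i ^ 2 = normalizedRowSum B⁻¹ i := by
    simp only [hv, ← Real.sqrt_sq_eq_abs, Real.sqrt_inj (sq_nonneg _) (hwpos _).le]
  have hmax (b : ι → ℝ) (hb : ∑ i, b i ^ 2 = 1) :
      IsMinEigenvalueMaximizer A b ↔ ∀ i, |b i| = v i := by
    rw [habs, ← isMinEigenvalueMaximizer_iff_sq_eq hB hBnonneg hb,
      isMinEigenvalueMaximizer_diagonal_mul_mul_diagonal_iff hs]
  have hsphere (b : ι → ℝ) (hb : ∀ i, |b i| = v i) : ∑ i, b i ^ 2 = 1 := by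
    simpa only [(habs b).mp hb] using sum_normalizedRowSum hB.inv
  refine ⟨fun b hb => ⟨hmax b hb, (hmax b hb).trans
    (forall_abs_eq_iff_exists_signature fun i => (hvpos i).le)⟩, ?_⟩
  rw [← ncard_setOf_forall_abs_eq hvpos]
  congr! 3 with b
  exact ⟨fun h => (hmax b h.1).mp h.2, fun h => ⟨hsphere b h, (hmax b (hsphere b h)).mpr h⟩⟩

end Maximizers

/-- A unit vector `b` maximizes the smallest eigenvalue of `W(b)` over the unit
sphere iff `|bᵢ| = v*ᵢ` for all `i`, iff `b = σ v*` for a signature matrix `σ`;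
in particular there are exactly `2^n` maximizers. -/
theorem maximizers_characterization (n : ℕ) (hn : 0 < n) (lam : Fin n → ℝ)
    (hpos : ∀ i, 0 < lam i) (hmono : StrictMono lam) :
    (∀ b : Fin n → ℝ, ∑ i, b i ^ 2 = 1 →
      (((∀ b' : Fin n → ℝ, ∑ i, b' i ^ 2 = 1 →
          sInf (spectrum ℝ (cauchyW n lam b')) ≤
            sInf (spectrum ℝ (cauchyW n lam b))) ↔
        ∀ i, |b i| = vStar n lam i) ∧
      ((∀ b' : Fin n → ℝ, ∑ i, b' i ^ 2 = 1 →
          sInf (spectrum ℝ (cauchyW n lam b')) ≤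
            sInf (spectrum ℝ (cauchyW n lam b))) ↔
        ∃ ε : Fin n → ℝ, (∀ i, ε i = 1 ∨ ε i = -1) ∧
          b = fun i => ε i * vStar n lam i))) ∧
    Set.ncard
      {b : Fin n → ℝ | ∑ i, b i ^ 2 = 1 ∧
        ∀ b' : Fin n → ℝ, ∑ i, b' i ^ 2 = 1 →
          sInf (spectrum ℝ (cauchyW n lam b')) ≤
            sInf (spectrum ℝ (cauchyW n lam b))} = 2 ^ n := by
  have : NeZero n := ⟨hn.ne'⟩
  have hchar := maximizers_characterization_general (posDef_cauchyMatrix hpos hmono)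
    (fun i => neg_one_pow_eq_or ℝ i)
    (fun i j => (inv_cauchyMatrix_checkerboard (fun i j => add_pos (hpos i) (hpos j))
      hmono hmono i j).le) fun i => (rfl : vStar n lam i = _)
  rwa [Fintype.card_fin] at hchar
end
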